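/- For τ in the upper half-plane and z ∈ ℂ, ϑ₁₀(2τ, z + τ/2) · ϑ₁₀(2τ, z − τ/2) = q^{−1/8} (η(2τ)²/η(τ)) · ϑ₀₀(τ, z), where q = e^{2πiτ}. -/

import Mathlib

open Real Complex Filter Topology

noncomputable section

noncomputable def theta00 (τ z : ℂ) : ℂ :=
  ∑' n : ℤ, Complex.exp (2*(π:ℂ)*Complex.I*(n:ℂ)*z) *
    Complex.exp (2*(π:ℂ)*Complex.I*τ*((n:ℂ)^2/2))

noncomputable def theta01 (τ z : ℂ) : ℂ :=
  ∑' n : ℤ, (-1:ℂ)^n * Complex.exp (2*(π:ℂ)*Complex.I*(n:ℂ)*z) *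
    Complex.exp (2*(π:ℂ)*Complex.I*τ*((n:ℂ)^2/2))

noncomputable def theta10 (τ z : ℂ) : ℂ :=
  ∑' n : ℤ, Complex.exp (2*(π:ℂ)*Complex.I*((n:ℂ)+1/2)*z) *
    Complex.exp (2*(π:ℂ)*Complex.I*τ*((1/2)*((n:ℂ)+1/2)^2))

noncomputable def theta11 (τ z : ℂ) : ℂ :=
  Complex.I * ∑' n : ℤ, (-1:ℂ)^n * Complex.exp (2*(π:ℂ)*Complex.I*((n:ℂ)+1/2)*z) *
    Complex.exp (2*(π:ℂ)*Complex.I*τ*((1/2)*((n:ℂ)+1/2)^2))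

noncomputable def dedekindEta (τ : ℂ) : ℂ :=
  Complex.exp ((π:ℂ)*Complex.I*τ/12) *
    ∏' n : ℕ, (1 - Complex.exp (2*(π:ℂ)*Complex.I*τ*((n:ℂ)+1)))

/-- The finite `q`-Pochhammer symbol `(q; q)_n = ∏_{i=1}^n (1 - q^i)`. -/
def qFactorialProd (q : ℂ) (n : ℕ) : ℂ := ∏ i ∈ Finset.range n, (1 - q ^ (i + 1))

lemma qFactorialProd_succ (q : ℂ) (n : ℕ) :
    qFactorialProd q (n + 1) = qFactorialProd q n * (1 - q ^ (n + 1)) :=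
  Finset.prod_range_succ _ _

lemma one_sub_pow_succ_ne_zero {q : ℂ} (hq : ‖q‖ < 1) (n : ℕ) : 1 - q ^ (n + 1) ≠ 0 := by
  intro h
  have h1 : ‖q ^ (n + 1)‖ < 1 := by
    rw [norm_pow]; exact pow_lt_one₀ (norm_nonneg _) hq n.succ_ne_zero
  rw [← sub_eq_zero.mp h, norm_one] at h1
  exact lt_irrefl _ h1

lemma qFactorialProd_ne_zero {q : ℂ} (hq : ‖q‖ < 1) (n : ℕ) : qFactorialProd q n ≠ 0 :=
  Finset.prod_ne_zero_iff.mpr fun i _ ↦ one_sub_pow_succ_ne_zero hq i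

/-- The summand of the finite form of Gauss's triangular number identity. -/
def gaussSummand (q : ℂ) (n j : ℕ) : ℂ :=
  q ^ (j + 1).choose 2 / (qFactorialProd q (n - j) * qFactorialProd q (n + 1 + j))

lemma sum_gaussSummand_telescope {q : ℂ} (hq : ‖q‖ < 1) (n m : ℕ) (hm : m ≤ n + 1) :
    (1 - q ^ (n + 1)) * (1 - q ^ (2 * n + 3)) * ∑ j ∈ Finset.range m, gaussSummand q (n + 1) j -
      (1 + q ^ (n + 1)) * ∑ j ∈ Finset.range m, gaussSummand q n j =
    -(q ^ (n + 1) * q ^ m.choose 2 * (1 - q ^ m)) /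
      (qFactorialProd q (n + 1 - m) * qFactorialProd q (n + 1 + m)) := by
  induction m with
  | zero => simp
  | succ m ih =>
    obtain ⟨k, rfl⟩ : ∃ k, n = m + k := ⟨n - m, by omega⟩
    rw [Finset.sum_range_succ, Finset.sum_range_succ, mul_add _ (Finset.sum _ _),
      mul_add _ (Finset.sum _ _), add_sub_add_comm, ih (by omega)]
    have hT : (m + 1).choose 2 = m.choose 2 + m := by
      rw [Nat.choose_succ_succ' m 1, Nat.choose_one_right, add_comm]
    have e1 : m + k + 1 - m = k + 1 := by omega
    have e2 : m + k - m = k := by omega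
    have e3 : m + k + 1 - (m + 1) = k := by omega
    have e4 : m + k + 1 + 1 + m = (m + k + 1 + m) + 1 := by omega
    have e5 : m + k + 1 + (m + 1) = (m + k + 1 + m) + 1 := by omega
    simp only [gaussSummand, e1, e2, e3, e4, e5, hT, qFactorialProd_succ]
    have h1 := qFactorialProd_ne_zero hq k
    have h2 := qFactorialProd_ne_zero hq (m + k + 1 + m)
    have h3 := one_sub_pow_succ_ne_zero hq k
    have h4 := one_sub_pow_succ_ne_zero hq (m + k + 1 + m)
    generalize qFactorialProd q k = P at *
    generalize qFactorialProd q (m + k + 1 + m) = Q at *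
    field_simp
    ring

lemma sum_gaussSummand {q : ℂ} (hq : ‖q‖ < 1) (n : ℕ) :
    qFactorialProd q (2 * n + 1) * ∑ j ∈ Finset.range (n + 1), gaussSummand q n j =
      (∏ i ∈ Finset.range n, (1 + q ^ (i + 1))) ^ 2 := by
  induction n with
  | zero =>
    have := one_sub_pow_succ_ne_zero hq 0
    simp only [zero_add, pow_one] at this
    simp [gaussSummand, qFactorialProd, this]
  | succ n ih =>
    have ht := sum_gaussSummand_telescope hq n (n + 1) le_rfl
    rw [Finset.prod_range_succ, mul_pow, ← ih, Finset.sum_range_succ _ (n + 1)]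
    have hT : (n + 1 + 1).choose 2 = (n + 1).choose 2 + (n + 1) := by
      rw [Nat.choose_succ_succ' (n + 1) 1, Nat.choose_one_right, add_comm]
    have e1 : n + 1 + (n + 1) = 2 * n + 1 + 1 := by omega
    have e2 : n + 1 + 1 + (n + 1) = 2 * n + 1 + 1 + 1 := by omega
    have e3 : 2 * (n + 1) + 1 = 2 * n + 1 + 1 + 1 := by omega
    have e4 : gaussSummand q (n + 1) (n + 1) = q ^ (n + 1) * q ^ (n + 1).choose 2 /
        qFactorialProd q (2 * n + 1 + 1 + 1) := by
      rw [gaussSummand, Nat.sub_self, e2, hT, pow_add]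
      simp [qFactorialProd, mul_comm]
    rw [e4]
    rw [e1, Nat.sub_self, show qFactorialProd q 0 = 1 by simp [qFactorialProd], one_mul] at ht
    rw [e3]
    have h1 := qFactorialProd_ne_zero hq (2 * n + 1)
    have h2 := one_sub_pow_succ_ne_zero hq (2 * n + 1)
    have h3 := one_sub_pow_succ_ne_zero hq (2 * n + 1 + 1)
    have h4 := one_sub_pow_succ_ne_zero hq n
    rw [qFactorialProd_succ q (2 * n + 1 + 1), qFactorialProd_succ q (2 * n + 1)] at *
    rw [eq_div_iff (mul_ne_zero h1 h2)] at ht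
    rw [mul_add, mul_div_cancel₀ _ (mul_ne_zero (mul_ne_zero h1 h2) h3)]
    refine mul_left_cancel₀ h4 ?_
    linear_combination ht

lemma tendsto_qFactorialProd {q : ℂ} (hq : ‖q‖ < 1) :
    Tendsto (qFactorialProd q) atTop (𝓝 (∏' i : ℕ, (1 - q ^ (i + 1)))) :=
  (ModularForm.multipliable_one_sub_pow hq).tendsto_prod_tprod_nat

lemma tprod_one_sub_pow_ne_zero {q : ℂ} (hq : ‖q‖ < 1) : ∏' i : ℕ, (1 - q ^ (i + 1)) ≠ 0 := by
  refine tprod_one_add_ne_zero_of_summable (f := fun n : ℕ ↦ -q ^ (n + 1)) (fun i ↦ ?_) ?_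
  · simpa [sub_eq_add_neg] using one_sub_pow_succ_ne_zero hq i
  · simpa using (summable_nat_add_iff 1).mpr (summable_geometric_of_lt_one (norm_nonneg _) hq)

lemma exists_norm_inv_qFactorialProd_le {q : ℂ} (hq : ‖q‖ < 1) :
    ∃ C : ℝ, ∀ n, ‖(qFactorialProd q n)⁻¹‖ ≤ C := by
  obtain ⟨C, hC⟩ := (Metric.isBounded_range_of_tendsto _
    ((tendsto_qFactorialProd hq).inv₀ (tprod_one_sub_pow_ne_zero hq))).exists_norm_le
  exact ⟨C, fun n ↦ hC _ ⟨n, rfl⟩⟩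

lemma summable_norm_pow_choose_two {q : ℂ} (hq : ‖q‖ < 1) :
    Summable fun j : ℕ ↦ ‖q‖ ^ (j + 1).choose 2 := by
  refine (summable_geometric_of_lt_one (norm_nonneg q) hq).of_nonneg_of_le (fun _ ↦ by positivity)
    fun j ↦ pow_le_pow_of_le_one (norm_nonneg q) hq.le ?_
  rw [Nat.choose_succ_succ' j 1, Nat.choose_one_right]
  omega

lemma multipliable_one_add_pow {q : ℂ} (hq : ‖q‖ < 1) :
    Multipliable fun n : ℕ ↦ 1 + q ^ (n + 1) := by
  apply multipliable_one_add_of_summable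
  simpa using (summable_nat_add_iff 1).mpr (summable_geometric_of_lt_one (norm_nonneg _) hq)

lemma tsum_pow_choose_two_eq_mul {q : ℂ} (hq : ‖q‖ < 1) :
    ∑' j : ℕ, q ^ (j + 1).choose 2 =
      (∏' i : ℕ, (1 - q ^ (i + 1))) * (∏' i : ℕ, (1 + q ^ (i + 1))) ^ 2 := by
  set E := ∏' i : ℕ, (1 - q ^ (i + 1)) with hE
  have hE0 : E ≠ 0 := tprod_one_sub_pow_ne_zero hq
  have hlim := tendsto_qFactorialProd hq
  obtain ⟨C, hC⟩ := exists_norm_inv_qFactorialProd_le hq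
  have hC0 : 0 ≤ C := (norm_nonneg _).trans (hC 0)
  have hsum : Tendsto (fun n ↦ ∑ j ∈ Finset.range (n + 1), gaussSummand q n j) atTop
      (𝓝 (∑' j : ℕ, q ^ (j + 1).choose 2 / (E * E))) := by
    have key : Tendsto (fun n ↦ ∑' j, if j ∈ Finset.range (n + 1) then gaussSummand q n j else 0)
        atTop (𝓝 (∑' j : ℕ, q ^ (j + 1).choose 2 / (E * E))) := by
      refine tendsto_tsum_of_dominated_convergence
        (bound := fun j ↦ ‖q‖ ^ (j + 1).choose 2 * (C * C))
        ((summable_norm_pow_choose_two hq).mul_right _) (fun j ↦ ?_) (.of_forall fun n j ↦ ?_)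
      · have h : Tendsto (fun n ↦ gaussSummand q n j) atTop
            (𝓝 (q ^ (j + 1).choose 2 / (E * E))) := by
          refine tendsto_const_nhds.div (.mul ?_ ?_) (mul_ne_zero hE0 hE0)
          · exact hlim.comp (tendsto_sub_atTop_nat j)
          · exact hlim.comp (tendsto_atTop_mono (fun n : ℕ ↦ (by omega : n ≤ n + 1 + j)) tendsto_id)
        refine h.congr' ?_
        filter_upwards [eventually_ge_atTop j] with n hn
        rw [if_pos (Finset.mem_range.mpr (by omega))]
      · split_ifs
        · rw [gaussSummand, div_eq_mul_inv, mul_inv, norm_mul, norm_mul, norm_pow]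
          gcongr
          · exact hC _
          · exact hC _
        · rw [norm_zero]; positivity
    refine key.congr fun n ↦ ?_
    rw [tsum_eq_sum (s := Finset.range (n + 1)) fun j hj ↦ if_neg hj]
    exact Finset.sum_congr rfl fun j hj ↦ if_pos hj
  have hL := (hlim.comp (tendsto_atTop_mono (fun n : ℕ ↦ (by omega : n ≤ 2 * n + 1))
    tendsto_id)).mul hsum
  have hR := ((multipliable_one_add_pow hq).tendsto_prod_tprod_nat).pow 2
  have h := tendsto_nhds_unique (hL.congr fun n ↦ sum_gaussSummand hq n) hR
  rw [tsum_div_const] at h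
  rw [← h, ← hE]
  field_simp

/-- Gauss's identity for the generating function of the triangular numbers. -/
lemma tsum_pow_choose_two {q : ℂ} (hq : ‖q‖ < 1) :
    ∑' j : ℕ, q ^ (j + 1).choose 2 =
      (∏' i : ℕ, (1 - (q ^ 2) ^ (i + 1))) ^ 2 / ∏' i : ℕ, (1 - q ^ (i + 1)) := by
  have h : ∏' i : ℕ, (1 - (q ^ 2) ^ (i + 1)) =
      (∏' i : ℕ, (1 - q ^ (i + 1))) * ∏' i : ℕ, (1 + q ^ (i + 1)) := by
    rw [← (ModularForm.multipliable_one_sub_pow hq).tprod_mul (multipliable_one_add_pow hq)]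
    exact tprod_congr fun i ↦ by ring
  rw [tsum_pow_choose_two_eq_mul hq, h, eq_div_iff (tprod_one_sub_pow_ne_zero hq)]
  ring

lemma tsum_triangular_int {q : ℂ} (hq : ‖q‖ < 1) {f : ℤ → ℂ}
    (hf : ∀ j : ℕ, f j = q ^ (j + 1).choose 2) (hsymm : ∀ d, f (-1 - d) = f d) :
    ∑' n : ℤ, f (2 * n) = ∑' j : ℕ, q ^ (j + 1).choose 2 := by
  have hs : Summable fun j : ℕ ↦ q ^ (j + 1).choose 2 :=
    .of_norm (by simpa using summable_norm_pow_choose_two hq)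
  have hi : Function.Injective fun k : ℕ ↦ 2 * k := mul_right_injective₀ two_ne_zero
  have he : Summable fun k : ℕ ↦ q ^ (2 * k + 1).choose 2 := hs.comp_injective hi
  have ho : Summable fun k : ℕ ↦ q ^ (2 * k + 1 + 1).choose 2 :=
    hs.comp_injective ((add_left_injective 1).comp hi)
  have h1 : (fun k : ℕ ↦ f (2 * (k : ℤ))) = fun k ↦ q ^ (2 * k + 1).choose 2 :=
    funext fun k ↦ by simpa using hf (2 * k)
  have h2 : (fun k : ℕ ↦ f (2 * (-((k : ℤ) + 1)))) = fun k ↦ q ^ (2 * k + 1 + 1).choose 2 :=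
    funext fun k ↦ by
      rw [← hf (2 * k + 1), ← hsymm]
      congr 1
      push_cast
      ring
  have hsum : ∑' n : ℤ, f (2 * n) =
      ∑' k : ℕ, f (2 * (k : ℤ)) + ∑' k : ℕ, f (2 * (-((k : ℤ) + 1))) :=
    tsum_of_nat_of_neg_add_one (f := fun n ↦ f (2 * n)) (h1 ▸ he) (h2 ▸ ho)
  rw [hsum, h1, h2]
  exact tsum_even_add_odd (f := fun j : ℕ ↦ q ^ (j + 1).choose 2) he ho

/-- Summing `q ^ (d * (d + 1) / 2)` over the integers `d` in one residue class modulo `2` does not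
depend on the class. -/
lemma tsum_triangular_int_sub {q : ℂ} (hq : ‖q‖ < 1) {f : ℤ → ℂ}
    (hf : ∀ j : ℕ, f j = q ^ (j + 1).choose 2) (hsymm : ∀ d, f (-1 - d) = f d) (M : ℤ) :
    ∑' n : ℤ, f (M - 2 * n) = ∑' j : ℕ, q ^ (j + 1).choose 2 := by
  rw [← tsum_triangular_int hq hf hsymm]
  obtain ⟨k, rfl | rfl⟩ := Int.even_or_odd' M
  · rw [← (Equiv.subLeft k).tsum_eq fun n ↦ f (2 * n)]
    refine tsum_congr fun n ↦ congrArg f ?_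
    simp only [Equiv.subLeft_apply]
    ring
  · rw [← (Equiv.subRight (k + 1)).tsum_eq fun n ↦ f (2 * n)]
    refine tsum_congr fun n ↦ ?_
    rw [← hsymm]
    congr 1
    simp only [Equiv.subRight_apply]
    ring

lemma summable_norm_theta10 {τ : ℂ} (hτ : 0 < τ.im) (z : ℂ) :
    Summable fun n : ℤ ↦ ‖cexp (2*(π:ℂ)*Complex.I*((n:ℂ)+1/2)*z) *
      cexp (2*(π:ℂ)*Complex.I*τ*((1/2)*((n:ℂ)+1/2)^2))‖ := by
  refine (((summable_jacobiTheta₂_term_iff (z + τ / 2) τ).mpr hτ).mul_left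
    (cexp (π * Complex.I * z + π * Complex.I * τ / 4))).norm.congr fun n ↦ ?_
  rw [jacobiTheta₂_term, ← Complex.exp_add, ← Complex.exp_add]
  congr 2
  ring

/-- The change of variables `(N, n) ↦ (N - 1 - n, n)` on `ℤ × ℤ`. -/
def antidiagonalShift : ℤ × ℤ ≃ ℤ × ℤ where
  toFun p := (p.1 - 1 - p.2, p.2)
  invFun p := (p.1 + 1 + p.2, p.2)
  left_inv p := Prod.ext (by ring) rfl
  right_inv p := Prod.ext (by ring) rfl

lemma theta10_mul_theta10 {τ : ℂ} (hτ : 0 < τ.im) (z : ℂ) :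
    theta10 (2 * τ) (z + τ / 2) * theta10 (2 * τ) (z - τ / 2) =
      theta00 τ z * ∑' j : ℕ, cexp (2 * π * Complex.I * τ) ^ (j + 1).choose 2 := by
  have hτ2 : 0 < (2 * τ).im := by simpa using hτ
  have hq : ‖cexp (2 * π * Complex.I * τ)‖ < 1 :=
    UpperHalfPlane.norm_exp_two_pi_I_lt_one ⟨τ, hτ⟩
  have h1 := summable_norm_theta10 hτ2 (z + τ / 2)
  have h2 := summable_norm_theta10 hτ2 (z - τ / 2)
  have hs := antidiagonalShift.summable_iff.mpr (summable_mul_of_summable_norm h1 h2)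
  rw [theta10, theta10, tsum_mul_tsum_of_summable_norm h1 h2, ← antidiagonalShift.tsum_eq]
  refine (hs.tsum_prod).trans ?_
  rw [theta00, ← tsum_mul_right]
  refine tsum_congr fun N ↦ ?_
  rw [← tsum_triangular_int_sub hq
    (f := fun d ↦ cexp (2 * π * Complex.I * τ * ((d : ℂ) * (d + 1) / 2))) ?_ ?_ (N - 1),
    ← tsum_mul_left]
  · refine tsum_congr fun n ↦ ?_
    simp only [Function.comp_apply, antidiagonalShift, Equiv.coe_fn_mk, ← Complex.exp_add]
    congr 1
    push_cast
    ring
  · intro j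
    rw [← Complex.exp_nat_mul, Nat.cast_choose_two]
    congr 1
    push_cast
    ring
  · intro d
    congr 1
    push_cast
    ring

lemma dedekindEta_eq (τ : ℂ) : dedekindEta τ = cexp (π * Complex.I * τ / 12) *
    ∏' n : ℕ, (1 - cexp (2 * π * Complex.I * τ) ^ (n + 1)) := by
  rw [dedekindEta]
  congr 1
  refine tprod_congr fun n ↦ ?_
  rw [← Complex.exp_nat_mul]
  congr 2
  push_cast
  ring

theorem stmt10 (τ z : ℂ) (hτ : 0 < τ.im) :
    theta10 (2*τ) (z + τ/2) * theta10 (2*τ) (z - τ/2) =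
      Complex.exp (2*(π:ℂ)*Complex.I*τ*(-(1/8))) * ((dedekindEta (2*τ))^2 / dedekindEta τ) * theta00 τ z := by
  have hq : ‖cexp (2 * π * Complex.I * τ)‖ < 1 :=
    UpperHalfPlane.norm_exp_two_pi_I_lt_one ⟨τ, hτ⟩
  have hsq : cexp (2 * π * Complex.I * (2 * τ)) = cexp (2 * π * Complex.I * τ) ^ 2 := by
    rw [← Complex.exp_nat_mul]
    congr 1
    push_cast
    ring
  have hexp : cexp (2 * π * Complex.I * τ * (-(1 / 8))) * cexp (π * Complex.I * (2 * τ) / 12) ^ 2 =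
      cexp (π * Complex.I * τ / 12) := by
    rw [← Complex.exp_nat_mul, ← Complex.exp_add]
    congr 1
    push_cast
    ring
  rw [theta10_mul_theta10 hτ, tsum_pow_choose_two hq, dedekindEta_eq, dedekindEta_eq, hsq, mul_pow,
    mul_comm, ← mul_div_assoc, ← mul_assoc, hexp, mul_div_mul_left _ _ (Complex.exp_ne_zero _)]

end
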